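/- arXiv:2504.08717 — 2 statements merged into one kernel-verified Lean document; each statement's English description precedes it below -/
import Mathlib

section
/- Let Γ be a finite subgroup of SL₂(ℂ) and R = ℂ[u,v]^Γ. There are finitely many anti-Poisson involutions of R up to conjugation by graded Poisson automorphisms; that is, there exists a finite set F of anti-Poisson involutions of R such that every anti-Poisson involution of R equals σ∘θ∘σ⁻¹ for some θ ∈ F and some graded Poisson automorphism σ of R. -/
/-!
Let `θ` be an anti-Poisson involution of `R = ℂ[u,v]^Γ`.

*Lifting.* `θ` is induced by a linear substitution `m` with `det m = -1` (`exists_lift`). To see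
this, extend `θ` to a homomorphism `φ` from `ℂ[u,v]` to an algebraic closure `M` of `ℂ(u,v)`, which
is possible as `ℂ[u,v]` is integral over `R`. The partial derivatives extend to `M`, and the chain
rule together with the anti-Poisson property shows that the entries of the Jacobian matrix of `φ`
become integral over `ℂ[u,v]` when multiplied by a bracket of invariants. Since `Γ` acts freely away
from the origin, the brackets of invariants have no common zero there (`exists_bracket_ne_zero`), so
the minimal polynomials of these entries have coefficients in `ℂ[u,v]`. As `θ` is graded, the entries
are killed by the Euler derivation, which forces them to be constant (`mem_range_of_euler`); thus
`φ u` and `φ v` are linear forms.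

*Discrete data.* A substitution fixing `R` pointwise belongs to `Γ` (`exists_mem_of_fix`). Hence
`m² ∈ Γ` and `m` normalizes `Γ`, and there are only finitely many possible pairs consisting of
the automorphism `γ ↦ m γ m⁻¹` and the element `m²`.

*Rigidity.* If `m` and `m'` share these data, then `A = m'⁻¹ m` commutes with `Γ`, and `1 ± A`
intertwines `± m` with `m'`. Since `det (1 + A) + det (1 - A) = 4`, one of these intertwiners is
invertible, so `m'` is conjugate to `m` or to `-m` under the centralizer of `Γ` in `SL₂(ℂ)`
(`centConj_or_neg`). That centralizer acts on `R` by graded Poisson automorphisms, so each pair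
accounts for at most two conjugacy classes.
-/

open MvPolynomial Complex Matrix

noncomputable section

abbrev P2 : Type := MvPolynomial (Fin 2) ℂ

/-- The standard Poisson bracket on `ℂ[u,v]`, where `u = X 0`, `v = X 1`. -/
def pb (f g : P2) : P2 :=
  pderiv 0 f * pderiv 1 g - pderiv 1 f * pderiv 0 g

/-- The algebra endomorphism of `ℂ[u,v]` given by the linear substitution
`X i ↦ ∑ j, m i j • X j`. -/
def matSub (m : Matrix (Fin 2) (Fin 2) ℂ) : P2 →ₐ[ℂ] P2 :=
  aeval fun i => ∑ j, MvPolynomial.C (m i j) * X j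

abbrev SL2 : Type := Matrix.SpecialLinearGroup (Fin 2) ℂ

/-- The action of `g ∈ SL₂(ℂ)` on polynomials: `(g · f)(w) = f (g⁻¹ w)`. -/
def slAct (g : SL2) : P2 →ₐ[ℂ] P2 := matSub (↑(g⁻¹))

/-- The invariant ring `ℂ[u,v]^Γ` as a subalgebra of `ℂ[u,v]`. -/
def invRing (Γ : Subgroup SL2) : Subalgebra ℂ P2 :=
  ⨅ g : Γ, AlgHom.equalizer (slAct (g : SL2)) (AlgHom.id ℂ P2)

/-- `θ` is a graded algebra automorphism: it preserves homogeneous elements of each degree. -/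
def IsGradedAut (Γ : Subgroup SL2) (θ : invRing Γ ≃ₐ[ℂ] invRing Γ) : Prop :=
  ∀ (d : ℕ) (f : invRing Γ), (f : P2).IsHomogeneous d → ((θ f : invRing Γ) : P2).IsHomogeneous d

/-- `θ` is an anti-Poisson involution: a graded algebra automorphism with `θ ∘ θ = id`
and `θ {f, g} = -{θ f, θ g}` (the bracket condition is stated on underlying polynomials,
for every element `h` of the invariant ring whose underlying polynomial is `{f, g}`). -/
def IsAntiPoissonInv (Γ : Subgroup SL2) (θ : invRing Γ ≃ₐ[ℂ] invRing Γ) : Prop :=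
  IsGradedAut Γ θ ∧ (∀ f, θ (θ f) = f) ∧
    ∀ f g h : invRing Γ, (h : P2) = pb (f : P2) (g : P2) →
      ((θ h : invRing Γ) : P2) = - pb ((θ f : invRing Γ) : P2) ((θ g : invRing Γ) : P2)

/-- `σ` is a graded Poisson automorphism. -/
def IsGradedPoissonAut (Γ : Subgroup SL2) (σ : invRing Γ ≃ₐ[ℂ] invRing Γ) : Prop :=
  IsGradedAut Γ σ ∧
    ∀ f g h : invRing Γ, (h : P2) = pb (f : P2) (g : P2) →
      ((σ h : invRing Γ) : P2) = pb ((σ f : invRing Γ) : P2) ((σ g : invRing Γ) : P2)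

/-- `θ'` is conjugate to `θ` by a graded Poisson automorphism: `θ' = σ ∘ θ ∘ σ⁻¹`. -/
def APIConj (Γ : Subgroup SL2) (θ θ' : invRing Γ ≃ₐ[ℂ] invRing Γ) : Prop :=
  ∃ σ : invRing Γ ≃ₐ[ℂ] invRing Γ, IsGradedPoissonAut Γ σ ∧ ∀ f, θ' f = σ (θ (σ.symm f))

/-- `θ` takes the values `x' y' z'` on `x y z`. -/
def Vals (Γ : Subgroup SL2) (θ : invRing Γ ≃ₐ[ℂ] invRing Γ)
    (x y z x' y' z' : invRing Γ) : Prop :=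
  θ x = x' ∧ θ y = y' ∧ θ z = z'

/-- The ideal `J_θ` generated by all `θ f - f`. -/
def Jideal (Γ : Subgroup SL2) (θ : invRing Γ ≃ₐ[ℂ] invRing Γ) : Ideal (invRing Γ) :=
  Ideal.span (Set.range fun f => θ f - f)

/-! ### Linear substitutions and derivations -/

/-- A derivation of `P` extends along a formally étale `P → T`, because
`T ⊗[P] Ω[P⁄ℂ] ≃ Ω[T⁄ℂ]`. -/
theorem exists_derivation_lift {P T : Type} [CommRing P] [CommRing T] [Algebra ℂ P] [Algebra ℂ T]
    [Algebra P T] [IsScalarTower ℂ P T] [Algebra.FormallyEtale P T] (d : Derivation ℂ P P) :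
    ∃ D : Derivation ℂ T T, ∀ p, D (algebraMap P T p) = algebraMap P T (d p) := by
  let e := KaehlerDifferential.tensorKaehlerEquivOfFormallyEtale ℂ P T
  let l : TensorProduct P T (Ω[P⁄ℂ]) →ₗ[T] T :=
    ((Algebra.linearMap P T).comp d.liftKaehlerDifferential).liftBaseChange T
  refine ⟨(l.comp e.symm.toLinearMap).compDer (KaehlerDifferential.D ℂ T), fun p => ?_⟩
  have := KaehlerDifferential.tensorKaehlerEquivOfFormallyEtale_symm_D_algebraMap ℂ P T p
  change l (e.symm (KaehlerDifferential.D ℂ T (algebraMap P T p))) = _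
  rw [this]
  simp [l]

/-- The extension of a derivation along a formally étale map is unique. -/
theorem derivation_eq_zero {P T : Type} [CommRing P] [CommRing T] [Algebra ℂ P] [Algebra ℂ T]
    [Algebra P T] [IsScalarTower ℂ P T] [Algebra.FormallyEtale P T] (D : Derivation ℂ T T)
    (h : ∀ p, D (algebraMap P T p) = 0) (x : T) : D x = 0 := by
  let e := KaehlerDifferential.tensorKaehlerEquivOfFormallyEtale ℂ P T
  have h1 : ∀ y : TensorProduct P T (Ω[P⁄ℂ]), D.liftKaehlerDifferential (e y) = 0 := by
    intro y
    induction y with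
    | zero => simp
    | add a b ha hb => simp [ha, hb]
    | tmul t w =>
      have hw : w ∈ Submodule.span P (Set.range (KaehlerDifferential.D ℂ P)) := by
        rw [KaehlerDifferential.span_range_derivation]; trivial
      induction hw using Submodule.span_induction with
      | mem w hw => obtain ⟨p, rfl⟩ := hw; simp [e, h]
      | zero => simp
      | add a b _ _ ha hb => simp [TensorProduct.tmul_add, ha, hb]
      | smul p w _ hw =>
        rw [TensorProduct.tmul_smul, ← algebraMap_smul T p, map_smul, map_smul, hw, smul_zero]
  have := h1 (e.symm (KaehlerDifferential.D ℂ T x))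
  simpa using this

/-- The chain rule for `p(φ u, φ v)`. -/
theorem derivation_chain (M : Type) [Field M] [Algebra ℂ M] [Algebra P2 M] [IsScalarTower ℂ P2 M]
    (φ : P2 →ₐ[ℂ] M) (D : Derivation ℂ M M) (p : P2) :
    D (φ p) = φ (pderiv 0 p) * D (φ (X 0)) + φ (pderiv 1 p) * D (φ (X 1)) := by
  induction p using MvPolynomial.induction_on with
  | C a =>
    rw [← MvPolynomial.algebraMap_eq, AlgHom.commutes]; simp
  | add p q hp hq => simp only [map_add, hp, hq]; ring
  | mul_X p i hp =>
    simp only [map_mul, Derivation.leibniz, hp, map_add, smul_eq_mul]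
    fin_cases i <;> simp <;> ring

/-- Substitution is an anti-homomorphism: `matSub n` applied first multiplies on the left. -/
theorem matSub_matSub (m n : Matrix (Fin 2) (Fin 2) ℂ) (f : P2) :
    matSub m (matSub n f) = matSub (n * m) f := by
  have : (matSub m).comp (matSub n) = matSub (n * m) := by
    apply MvPolynomial.algHom_ext
    intro i
    simp [matSub, Matrix.mul_apply, Fin.sum_univ_two]
    ring
  exact congrArg (fun F => F f) this

theorem matSub_one (f : P2) : matSub 1 f = f := by
  have : matSub 1 = AlgHom.id ℂ P2 := by
    apply MvPolynomial.algHom_ext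
    intro i
    fin_cases i <;> simp [matSub, Fin.sum_univ_two]
  rw [this]; rfl

theorem matSub_injective_of_X {m n : Matrix (Fin 2) (Fin 2) ℂ}
    (h : ∀ i, matSub m (X i) = matSub n (X i)) : m = n := by
  ext i j
  have := congrArg (fun p => eval (Pi.single j 1) p) (h i)
  fin_cases j <;> simpa [matSub, Fin.sum_univ_two] using this

theorem eval_matSub (m : Matrix (Fin 2) (Fin 2) ℂ) (w : Fin 2 → ℂ) (f : P2) :
    eval w (matSub m f) = eval (m *ᵥ w) f := by
  have : (aeval w : P2 →ₐ[ℂ] ℂ).comp (matSub m) = aeval (m *ᵥ w) := by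
    apply MvPolynomial.algHom_ext
    intro i
    fin_cases i <;> simp [matSub, Fin.sum_univ_two]
  have h := congrArg (fun F => F f) this
  simpa [aeval_eq_eval] using h

theorem matSub_homog (m : Matrix (Fin 2) (Fin 2) ℂ) {f : P2} {d : ℕ} (hf : f.IsHomogeneous d) :
    (matSub m f).IsHomogeneous d := by
  have := hf.aeval (fun i => ∑ j, MvPolynomial.C (m i j) * X j : Fin 2 → P2) (n := 1) ?_
  · simpa [matSub] using this
  · intro i
    apply MvPolynomial.IsHomogeneous.sum
    intro j _
    simpa using (isHomogeneous_C (Fin 2) (m i j)).mul (isHomogeneous_X ℂ j)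

theorem matSub_homogComp (m : Matrix (Fin 2) (Fin 2) ℂ) (f : P2) (d : ℕ) :
    matSub m (homogeneousComponent d f) = homogeneousComponent d (matSub m f) := by
  conv_rhs => rw [← sum_homogeneousComponent f, map_sum, map_sum]
  have : ∀ i, homogeneousComponent d (matSub m (homogeneousComponent i f)) =
      if i = d then matSub m (homogeneousComponent i f) else 0 := by
    intro i
    rw [homogeneousComponent_of_mem (matSub_homog m (homogeneousComponent_isHomogeneous i f))]
    simp [eq_comm]
  simp only [this, Finset.sum_ite_eq', Finset.mem_range]
  split_ifs with h
  · rfl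
  · rw [homogeneousComponent_eq_zero, map_zero]; omega

theorem pderiv_matSub (m : Matrix (Fin 2) (Fin 2) ℂ) (k : Fin 2) (p : P2) :
    pderiv k (matSub m p) =
      matSub m (pderiv 0 p) * C (m 0 k) + matSub m (pderiv 1 p) * C (m 1 k) := by
  induction p using MvPolynomial.induction_on with
  | C a => simp [matSub]
  | add p q hp hq => simp only [map_add, hp, hq]; ring
  | mul_X p i hp =>
    simp only [map_mul, Derivation.leibniz, hp, map_add, smul_eq_mul]
    fin_cases i <;> fin_cases k <;> simp [matSub, Fin.sum_univ_two] <;> ring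

theorem pb_matSub (m : Matrix (Fin 2) (Fin 2) ℂ) (f g : P2) :
    pb (matSub m f) (matSub m g) = C m.det * matSub m (pb f g) := by
  simp only [pb, pderiv_matSub, Matrix.det_fin_two, map_sub, map_mul]
  ring

theorem mem_invRing {Γ : Subgroup SL2} {f : P2} :
    f ∈ invRing Γ ↔ ∀ g ∈ Γ, matSub (g : Matrix (Fin 2) (Fin 2) ℂ) f = f := by
  simp only [invRing, Algebra.mem_iInf, AlgHom.mem_equalizer, slAct, Subtype.forall]
  constructor
  · intro h g hg
    simpa using h g⁻¹ (inv_mem hg)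
  · intro h g hg
    exact h g⁻¹ (inv_mem hg)

theorem pb_mem {Γ : Subgroup SL2} {f g : P2} (hf : f ∈ invRing Γ) (hg : g ∈ invRing Γ) :
    pb f g ∈ invRing Γ := by
  rw [mem_invRing] at *
  intro γ hγ
  have := pb_matSub (γ : Matrix (Fin 2) (Fin 2) ℂ) f g
  rw [hf γ hγ, hg γ hγ] at this
  simpa using this.symm

theorem homogComp_mem {Γ : Subgroup SL2} {f : P2} (hf : f ∈ invRing Γ) (d : ℕ) :
    homogeneousComponent d f ∈ invRing Γ := by
  rw [mem_invRing] at *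
  intro γ hγ
  rw [matSub_homogComp, hf γ hγ]

/-! ### Brackets of invariants have no common zero off the origin -/

/-- The polynomial `∏ γ, (T - γ f)` has coefficients in `ℂ[u,v]^Γ`. In particular `ℂ[u,v]` is
integral over the invariants. The `Finset` `s` enumerates `Γ`. -/
theorem orbit_poly (Γ : Subgroup SL2) [Finite Γ] (f : P2) :
    ∃ q : Polynomial (invRing Γ), q.Monic ∧ ∃ s : Finset SL2, (∀ γ, γ ∈ s ↔ γ ∈ Γ) ∧
      q.map (algebraMap (invRing Γ) P2) =
        ∏ γ ∈ s, (Polynomial.X - Polynomial.C (matSub (γ : Matrix (Fin 2) (Fin 2) ℂ) f)) := by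
  have hfin : (Γ : Set SL2).Finite := Set.toFinite _
  set s := hfin.toFinset
  have hs : ∀ γ, γ ∈ s ↔ γ ∈ Γ := by simp [s]
  set Q : Polynomial P2 :=
    ∏ γ ∈ s, (Polynomial.X - Polynomial.C (matSub (γ : Matrix (Fin 2) (Fin 2) ℂ) f)) with hQ
  have hinv : ∀ δ ∈ Γ, Q.map (matSub (δ : Matrix (Fin 2) (Fin 2) ℂ)).toRingHom = Q := by
    intro δ hδ
    rw [hQ, Polynomial.map_prod]
    refine Finset.prod_bij (fun γ _ => γ * δ) ?_ ?_ ?_ ?_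
    · intro γ hγ; rw [hs] at *; exact mul_mem hγ hδ
    · intro a _ b _ h; simpa using h
    · intro γ hγ
      exact ⟨γ * δ⁻¹, by rw [hs] at *; exact mul_mem hγ (inv_mem hδ), by simp⟩
    · intro γ _
      simp [matSub_matSub]
  have hmonic : Q.Monic := Polynomial.monic_prod_of_monic _ _ fun _ _ => Polynomial.monic_X_sub_C _
  have hl : Q ∈ Polynomial.lifts (algebraMap (invRing Γ) P2) := by
    rw [Polynomial.lifts_iff_coeff_lifts]
    intro n
    refine ⟨⟨Q.coeff n, ?_⟩, rfl⟩
    rw [mem_invRing]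
    intro δ hδ
    conv_rhs => rw [← hinv δ hδ]
    simp
  obtain ⟨q, hq, _, hqm⟩ := Polynomial.lifts_and_degree_eq_and_monic hl hmonic
  exact ⟨q, hqm, s, hs, hq⟩

/-- A nonunit of `ℂ[u,v]` vanishes somewhere other than at the origin. Otherwise its restriction to
a line avoiding the origin is a polynomial in one variable without roots, hence constant, and two
such lines join any point off the axes to `(1, 0)`. -/
theorem exists_nonzero_zero (n : P2) (hn : ¬ IsUnit n) : ∃ p : Fin 2 → ℂ, p ≠ 0 ∧ eval p n = 0 := by
  by_contra! H
  -- constancy along each line that misses the origin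
  have line : ∀ v w : Fin 2 → ℂ, (∀ t : ℂ, v + t • w ≠ 0) → ∀ t : ℂ,
      eval (v + t • w) n = eval v n := by
    intro v w hvw t
    let q : Polynomial ℂ := aeval (fun i => Polynomial.C (v i) + Polynomial.X * Polynomial.C (w i)) n
    have hq : ∀ t, q.eval t = eval (v + t • w) n := by
      intro t
      have : ((Polynomial.aeval t : Polynomial ℂ →ₐ[ℂ] ℂ).comp
          (aeval (fun i => Polynomial.C (v i) + Polynomial.X * Polynomial.C (w i)))) =
          (aeval (v + t • w) : P2 →ₐ[ℂ] ℂ) := by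
        apply MvPolynomial.algHom_ext
        intro i
        simp only [AlgHom.comp_apply, aeval_X, map_add, map_mul, Polynomial.aeval_X,
          Polynomial.aeval_C, Pi.add_apply, Pi.smul_apply, smul_eq_mul]
        simp
      have h : Polynomial.aeval t q = aeval (v + t • w) n := congrArg (fun F => F n) this
      rwa [Polynomial.coe_aeval_eq_eval, MvPolynomial.aeval_eq_eval] at h
    have hdeg : q.degree = 0 := by
      by_contra hd
      obtain ⟨z, hz⟩ := IsAlgClosed.exists_root q hd
      exact H _ (hvw z) (by rw [← hq]; exact hz)
    have hc : ∀ t, q.eval t = q.coeff 0 := fun t => by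
      conv_lhs => rw [Polynomial.eq_C_of_degree_eq_zero hdeg, Polynomial.eval_C]
    have h0 := (hc 0).symm.trans (hq 0)
    rw [zero_smul, add_zero] at h0
    rw [← h0, ← hc t, hq]
  have key : ∀ a b : ℂ, a ≠ 0 → b ≠ 0 → eval ![a, b] n = eval ![1, 0] n := by
    intro a b ha hb
    have h1 := line ![a, b] ![1, 0] (by intro t h; have := congrFun h 1; simp [hb] at this) (1 - a)
    have h2 := line ![1, 0] ![0, 1] (by intro t h; have := congrFun h 0; simp at this) b
    rw [← h1, ← h2]
    congr 2
    ext i; fin_cases i <;> simp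
  have hz : X 0 * X 1 * (n - C (eval ![1, 0] n)) = 0 := by
    apply MvPolynomial.funext
    intro x
    by_cases h0 : x 0 = 0
    · simp [h0]
    by_cases h1 : x 1 = 0
    · simp [h1]
    have := key _ _ h0 h1
    have hx : ![x 0, x 1] = x := by ext i; fin_cases i <;> simp
    rw [hx] at this
    simp [this]
  have hn' : n = C (eval ![1, 0] n) := by
    have := (mul_eq_zero.1 hz).resolve_left (mul_ne_zero (X_ne_zero _) (X_ne_zero _))
    exact sub_eq_zero.1 this
  apply hn
  rw [hn']
  exact (isUnit_iff_ne_zero.2 (H _ (by intro h; have := congrFun h 0; simp at this))).map C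

/-- An element of finite order in `SL₂(ℂ)` which fixes a nonzero vector is trivial: it is unipotent,
`γ = 1 + N` with `N² = 0`, so `γ ^ n = 1 + n N`. -/
theorem free_action (γ : SL2) (hγ : IsOfFinOrder γ) (p : Fin 2 → ℂ) (hp : p ≠ 0)
    (h : γ.1 *ᵥ p = p) : γ = 1 := by
  set A : Matrix (Fin 2) (Fin 2) ℂ := γ.1 with hA
  have hdet : A.det = 1 := γ.2
  set N := A - 1 with hN
  have hNp : N *ᵥ p = 0 := by rw [hN, Matrix.sub_mulVec, h]; simp
  have hNdet : N.det = 0 := by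
    rw [← Matrix.exists_mulVec_eq_zero_iff]
    exact ⟨p, hp, hNp⟩
  have hN2 : N * N = 0 := by
    rw [Matrix.det_fin_two] at hdet hNdet
    simp only [hN, Matrix.sub_apply, Matrix.one_apply] at hNdet
    simp at hNdet
    have htr : A 0 0 + A 1 1 = 2 := by linear_combination hdet - hNdet
    have h11 : A 1 1 = 2 - A 0 0 := by linear_combination htr
    rw [h11] at hdet
    ext i j
    fin_cases i <;> fin_cases j <;> simp [hN, Matrix.mul_apply, Fin.sum_univ_two, h11] <;>
      first | ring1 | linear_combination -hdet
  have hpow : ∀ n : ℕ, A ^ n = 1 + (n : ℂ) • N := by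
    intro n
    induction n with
    | zero => simp
    | succ k ih =>
      have : A = 1 + N := by simp [hN]
      rw [pow_succ, ih, this]
      simp [mul_add, add_mul, hN2, add_smul]
      abel
  obtain ⟨n, hn, hn1⟩ := isOfFinOrder_iff_pow_eq_one.1 hγ
  have h1 : A ^ n = 1 := by
    have := congrArg Subtype.val hn1
    simpa [hA] using this
  rw [hpow] at h1
  have h2 : (n : ℂ) • N = 0 := by simpa using h1
  have h3 : N = 0 := (smul_eq_zero.1 h2).resolve_left (by exact_mod_cast hn.ne')
  apply Subtype.ext
  simpa [hN, sub_eq_zero] using h3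

/-- Away from the origin some bracket of two invariants does not vanish. As `Γ` acts freely there,
a polynomial `A` can be chosen with `A p ≠ 0` and `A (γ p) = 0` for `γ ≠ 1`; the `Γ`-averages of
`(X i - p i) A²` have linearly independent differentials at `p`. -/
theorem exists_bracket_ne_zero (Γ : Subgroup SL2) [Finite Γ] (p : Fin 2 → ℂ) (hp : p ≠ 0) :
    ∃ f ∈ invRing Γ, ∃ g ∈ invRing Γ, eval p (pb f g) ≠ 0 := by
  have hfin : (Γ : Set SL2).Finite := Set.toFinite _
  set s := hfin.toFinset
  have hs : ∀ γ, γ ∈ s ↔ γ ∈ Γ := by simp [s]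
  have hsep : ∀ γ : SL2, ∃ a : P2, γ ∈ Γ → γ ≠ 1 →
      eval ((γ : Matrix (Fin 2) (Fin 2) ℂ) *ᵥ p) a = 0 ∧ eval p a ≠ 0 := by
    intro γ
    by_cases h : γ ∈ Γ ∧ γ ≠ 1
    · have hne : (γ : Matrix (Fin 2) (Fin 2) ℂ) *ᵥ p ≠ p := fun he =>
        h.2 (free_action γ (Submonoid.isOfFinOrder_coe.2
          (isOfFinOrder_of_finite (⟨γ, h.1⟩ : Γ))) p hp he)
      obtain ⟨i, hi⟩ := Function.ne_iff.1 hne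
      exact ⟨X i - C (((γ : Matrix (Fin 2) (Fin 2) ℂ) *ᵥ p) i), fun _ _ =>
        ⟨by simp, by simpa [sub_eq_zero] using hi.symm⟩⟩
    · exact ⟨0, fun h1 h2 => (h ⟨h1, h2⟩).elim⟩
  choose a ha using hsep
  classical
  set A : P2 := ∏ γ ∈ s.erase 1, a γ with hA
  have hA0 : ∀ γ ∈ Γ, γ ≠ 1 → eval ((γ : Matrix (Fin 2) (Fin 2) ℂ) *ᵥ p) A = 0 := by
    intro γ h1 h2
    rw [hA, map_prod]
    exact Finset.prod_eq_zero (Finset.mem_erase.2 ⟨h2, (hs γ).2 h1⟩) (ha γ h1 h2).1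
  have hAp : eval p A ≠ 0 := by
    rw [hA, map_prod]
    refine Finset.prod_ne_zero_iff.2 fun γ h => ?_
    rw [Finset.mem_erase, hs] at h
    exact (ha γ h.2 h.1).2
  -- the square makes the translates by `γ ≠ 1` vanish at `p` to second order
  let h : Fin 2 → P2 := fun i => (X i - C (p i)) * A ^ 2
  let F : Fin 2 → P2 := fun i => ∑ γ ∈ s, matSub (γ : Matrix (Fin 2) (Fin 2) ℂ) (h i)
  have hF : ∀ i, F i ∈ invRing Γ := by
    intro i
    rw [mem_invRing]
    intro δ hδ
    simp only [F, map_sum]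
    refine Finset.sum_bij (fun γ _ => γ * δ) ?_ ?_ ?_ ?_
    · intro γ hγ; rw [hs] at *; exact mul_mem hγ hδ
    · intro a _ b _ h; simpa using h
    · intro γ hγ
      exact ⟨γ * δ⁻¹, by rw [hs] at *; exact mul_mem hγ (inv_mem hδ), by simp⟩
    · intro γ _
      simp [matSub_matSub]
  have hdF : ∀ i k, eval p (pderiv k (F i)) = if i = k then (eval p A) ^ 2 else 0 := by
    intro i k
    simp only [F, map_sum]
    rw [Finset.sum_eq_single 1]
    · simp only [pderiv_matSub, map_add, map_mul, eval_matSub]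
      fin_cases i <;> fin_cases k <;> simp [h]
    · intro γ hγ hγ1
      simp only [pderiv_matSub, map_add, map_mul, eval_matSub]
      have := hA0 γ ((hs γ).1 hγ) hγ1
      generalize (γ : Matrix (Fin 2) (Fin 2) ℂ) *ᵥ p = q at this
      simp [h, Derivation.leibniz, pow_two, this]
    · intro h1; exact (h1 ((hs 1).2 (one_mem Γ))).elim
  refine ⟨F 0, hF 0, F 1, hF 1, ?_⟩
  simp [pb, hdF, hAp]

/-- A rational function which becomes a polynomial on multiplication by powers of the brackets of
invariants is a polynomial: a nonconstant denominator would vanish at some `p ≠ 0`, where a suitable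
bracket does not. -/
theorem mem_range_of_bracket_mul (Γ : Subgroup SL2) [Finite Γ] (a : FractionRing P2)
    (h : ∀ f ∈ invRing Γ, ∀ g ∈ invRing Γ, ∃ k : ℕ, ∃ r : P2,
      algebraMap P2 (FractionRing P2) (pb f g) ^ k * a = algebraMap P2 (FractionRing P2) r) :
    ∃ r : P2, a = algebraMap P2 (FractionRing P2) r := by
  set n := IsFractionRing.num P2 a
  set d : P2 := (IsFractionRing.den P2 a).1 with hd
  have hd0 : d ≠ 0 := nonZeroDivisors.ne_zero (IsFractionRing.den P2 a).2
  have ha : a * algebraMap P2 (FractionRing P2) d = algebraMap P2 (FractionRing P2) n := by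
    have := IsFractionRing.mk'_num_den P2 a
    rw [← this, hd, IsLocalization.mk'_spec]
  have hrel : IsRelPrime n d := IsFractionRing.num_den_reduced P2 a
  by_cases hu : IsUnit d
  · obtain ⟨e, he⟩ := hu.exists_right_inv
    refine ⟨n * e, ?_⟩
    rw [map_mul, ← ha, mul_assoc, ← map_mul, he]; simp
  · exfalso
    obtain ⟨p, hp, hpd⟩ := exists_nonzero_zero d hu
    obtain ⟨f, hf, g, hg, hfg⟩ := exists_bracket_ne_zero Γ p hp
    obtain ⟨k, r, hr⟩ := h f hf g hg
    have h1 : pb f g ^ k * n = r * d := by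
      apply IsFractionRing.injective P2 (FractionRing P2)
      rw [map_mul, map_mul, ← ha, ← hr, map_pow]; ring
    have h2 : d ∣ pb f g ^ k := hrel.symm.dvd_of_dvd_mul_right ⟨r, by rw [h1]; ring⟩
    obtain ⟨c, hc⟩ := h2
    have := congrArg (eval p) hc
    rw [map_pow, map_mul, hpd, zero_mul] at this
    exact hfg (by by_contra h3; exact pow_ne_zero k h3 this)

/-! ### Elements killed by the Euler derivation -/

/-- The Euler derivation `u ∂/∂u + v ∂/∂v`. -/
def eul (p : P2) : P2 := X 0 * pderiv 0 p + X 1 * pderiv 1 p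

theorem eul_homog {p : P2} {d : ℕ} (hp : p.IsHomogeneous d) : eul p = d • p := by
  have := hp.sum_X_mul_pderiv
  rwa [Fin.sum_univ_two] at this

theorem eul_sum {ι : Type} (s : Finset ι) (f : ι → P2) : eul (∑ i ∈ s, f i) = ∑ i ∈ s, eul (f i) := by
  simp only [eul, map_sum, Finset.mul_sum, Finset.sum_add_distrib]

theorem coeff_eul (p : P2) (s : Fin 2 →₀ ℕ) : coeff s (eul p) = ((s 0 + s 1 : ℕ) : ℂ) * coeff s p := by
  induction p using MvPolynomial.induction_on' with
  | monomial t a =>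
    rw [eul, X_mul_pderiv_monomial, X_mul_pderiv_monomial, coeff_add, coeff_smul, coeff_smul,
      coeff_monomial]
    split_ifs with h
    · rw [h]; push_cast; simp [nsmul_eq_mul]; ring
    · simp
  | add p q hp hq =>
    have : eul (p + q) = eul p + eul q := by simp only [eul, map_add]; ring
    rw [this, coeff_add, coeff_add, hp, hq]; ring

/-- The Euler derivation kills only the constants. -/
theorem eq_C_of_eul_eq_zero {p : P2} (h : eul p = 0) : p = C (coeff 0 p) := by
  ext s
  rw [coeff_C]
  split_ifs with hs
  · rw [← hs]
  · have := coeff_eul p s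
    rw [h, coeff_zero] at this
    refine (mul_eq_zero.1 this.symm).resolve_left fun h0 => hs ?_
    have h1 : s 0 + s 1 = 0 := by exact_mod_cast h0
    ext i; fin_cases i <;> simp <;> omega

/-- The minimal polynomial of `d b` is that of `b` with its roots scaled by `d`. -/
theorem minpoly_mul_eq {K M : Type} [Field K] [Field M] [Algebra K M] (d : K) (hd : d ≠ 0) (b : M)
    (hb : IsIntegral K b) :
    minpoly K (algebraMap K M d * b) = (minpoly K b).scaleRoots d := by
  have hdb : IsIntegral K (algebraMap K M d * b) := isIntegral_algebraMap.mul hb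
  refine (Polynomial.eq_of_monic_of_dvd_of_natDegree_le (minpoly.monic hdb)
    ((Polynomial.monic_scaleRoots_iff d).2 (minpoly.monic hb)) ?_ ?_).symm
  · exact minpoly.dvd _ _ (Polynomial.scaleRoots_aeval_eq_zero (minpoly.aeval K b))
  · rw [Polynomial.natDegree_scaleRoots,
      ← Polynomial.natDegree_scaleRoots (minpoly K (algebraMap K M d * b)) d⁻¹]
    refine Polynomial.natDegree_le_of_dvd (minpoly.dvd _ _ ?_)
      ((Polynomial.monic_scaleRoots_iff _).2 (minpoly.monic hdb)).ne_zero
    have := Polynomial.scaleRoots_aeval_eq_zero (r := d⁻¹)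
      (minpoly.aeval K (algebraMap K M d * b))
    rwa [← mul_assoc, ← map_mul, inv_mul_cancel₀ hd, map_one, one_mul] at this

/-- Let `b` be algebraic over `ℂ(u,v)`, integral over `ℂ[u,v]` after multiplication by any bracket of
invariants, and killed by an extension `E` of the Euler derivation. Then `b` is a constant.

The coefficients of the minimal polynomial of `b` are polynomials by `mem_range_of_bracket_mul`.
Applying `E` to the equation satisfied by `b` yields an equation of smaller degree, so the Euler
derivation kills all coefficients: they are constants, and `b` is algebraic over `ℂ`. -/
theorem mem_range_of_euler (Γ : Subgroup SL2) [Finite Γ]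
    (M : Type) [Field M] [Algebra ℂ M] [Algebra P2 M] [Algebra (FractionRing P2) M]
    [IsScalarTower ℂ P2 M] [IsScalarTower P2 (FractionRing P2) M]
    [Algebra.IsAlgebraic (FractionRing P2) M] (b : M)
    (hI : ∀ f ∈ invRing Γ, ∀ g ∈ invRing Γ, IsIntegral P2 (algebraMap P2 M (pb f g) * b))
    (E : Derivation ℂ M M) (hE : ∀ p, E (algebraMap P2 M p) = algebraMap P2 M (eul p))
    (hEb : E b = 0) : ∃ c : ℂ, b = algebraMap ℂ M c := by
  set K := FractionRing P2
  have hb : IsIntegral K b := Algebra.IsIntegral.isIntegral b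
  have hcoef : ∀ i, ∃ r : P2, (minpoly K b).coeff i = algebraMap P2 K r := by
    intro i
    apply mem_range_of_bracket_mul Γ
    intro f hf g hg
    by_cases h0 : pb f g = 0
    · exact ⟨1, 0, by simp [h0]⟩
    · have hd : algebraMap P2 K (pb f g) ≠ 0 := by
        simpa using h0
      have h1 := minpoly_mul_eq (algebraMap P2 K (pb f g)) hd b hb
      rw [← IsScalarTower.algebraMap_apply P2 K M] at h1
      rw [minpoly.isIntegrallyClosed_eq_field_fractions' K (hI f hf g hg)] at h1
      have h2 := congrArg (fun p => p.coeff i) h1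
      simp only [Polynomial.coeff_map, Polynomial.coeff_scaleRoots] at h2
      exact ⟨_, _, by rw [h2, mul_comm]⟩
  choose r hr using hcoef
  set n := (minpoly K b).natDegree with hn
  have hrn : r n = 1 := by
    apply IsFractionRing.injective P2 K
    rw [← hr, map_one, hn]
    exact minpoly.monic hb
  have hsum : ∑ i ∈ Finset.range (n + 1), algebraMap P2 M (r i) * b ^ i = 0 := by
    have := minpoly.aeval K b
    rw [Polynomial.aeval_eq_sum_range] at this
    rw [← this]
    refine Finset.sum_congr rfl fun i _ => ?_
    rw [hr, Algebra.smul_def, ← IsScalarTower.algebraMap_apply P2 K M]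
  have hEsum : ∑ i ∈ Finset.range n, algebraMap P2 M (eul (r i)) * b ^ i = 0 := by
    have hterm : ∀ i, E (algebraMap P2 M (r i) * b ^ i) = algebraMap P2 M (eul (r i)) * b ^ i := by
      intro i
      simp [Derivation.leibniz, Derivation.leibniz_pow, hEb, hE, mul_comm]
    have h := congrArg E hsum
    rw [map_sum, map_zero, Finset.sum_range_succ, hterm, hrn] at h
    simp only [hterm] at h
    simpa [eul] using h
  have hli := linearIndependent_pow (K := K) b
  have heul : ∀ i < n, eul (r i) = 0 := by
    rw [Fintype.linearIndependent_iff] at hli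
    have := hli (fun i => algebraMap P2 K (eul (r i))) (by
      rw [← hEsum, Finset.sum_range]
      refine Finset.sum_congr rfl fun i _ => ?_
      rw [Algebra.smul_def, ← IsScalarTower.algebraMap_apply P2 K M])
    intro i hi
    have h := this ⟨i, hi⟩
    simpa using h
  let q : Polynomial ℂ := ∑ i ∈ Finset.range (n + 1), Polynomial.monomial i (coeff 0 (r i))
  have hq : Polynomial.aeval b q = 0 := by
    rw [← hsum]
    simp only [q, map_sum, Polynomial.aeval_monomial]
    refine Finset.sum_congr rfl fun i hi => ?_
    congr 1
    have hri : r i = C (coeff 0 (r i)) := by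
      apply eq_C_of_eul_eq_zero
      rcases Nat.lt_or_ge i n with h | h
      · exact heul i h
      · have : i = n := by rw [Finset.mem_range] at hi; omega
        rw [this, hrn]; simp [eul]
    conv_rhs => rw [hri, ← MvPolynomial.algebraMap_eq, ← IsScalarTower.algebraMap_apply ℂ P2 M]
  have hq0 : q ≠ 0 := by
    intro h
    have h1 := congrArg (fun p => p.coeff n) h
    simp [q, Polynomial.finsetSum_coeff, Polynomial.coeff_monomial, hrn] at h1
  have hbC : IsIntegral ℂ b := (show IsAlgebraic ℂ b from ⟨q, hq0, hq⟩).isIntegral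
  obtain ⟨c, hc⟩ := minpoly.mem_range_of_degree_eq_one ℂ b
    (IsAlgClosed.degree_eq_one_of_irreducible ℂ (minpoly.irreducible hbC))
  exact ⟨c, hc.symm⟩

/-- An embedding of `R` in an algebraically closed field extends to an algebraic extension of `R`. -/
theorem exists_ringHom_extension {R S M : Type} [CommRing R] [IsDomain R] [CommRing S] [IsDomain S]
    [Algebra R S] [Field M] [IsAlgClosed M] [Module.IsTorsionFree R S] [Algebra.IsAlgebraic R S]
    (ψ : R →+* M) (hψ : Function.Injective ψ) :
    ∃ φ : S →+* M, ∀ r, φ (algebraMap R S r) = ψ r := by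
  let : Algebra R M := ψ.toAlgebra
  have : FaithfulSMul R M := (faithfulSMul_iff_algebraMap_injective R M).2 hψ
  have : Module.IsTorsionFree R M := inferInstance
  exact ⟨(IsAlgClosed.lift : S →ₐ[R] M).toRingHom, fun r => (IsAlgClosed.lift : S →ₐ[R] M).commutes r⟩

/-! ### Lifting anti-Poisson involutions to linear maps -/

theorem eul_mem {Γ : Subgroup SL2} {f : P2} (hf : f ∈ invRing Γ) : eul f ∈ invRing Γ := by
  rw [← sum_homogeneousComponent f, eul_sum]
  refine sum_mem fun d _ => ?_
  rw [eul_homog (homogeneousComponent_isHomogeneous d f)]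
  exact nsmul_mem (homogComp_mem hf d) d

/-- A graded automorphism commutes with the Euler derivation. -/
theorem eul_comm {Γ : Subgroup SL2} {θ : invRing Γ ≃ₐ[ℂ] invRing Γ} (hθ : IsGradedAut Γ θ)
    (f : invRing Γ) : ((θ ⟨eul f, eul_mem f.2⟩ : invRing Γ) : P2) = eul (θ f : P2) := by
  let c : ℕ → invRing Γ := fun d => ⟨homogeneousComponent d (f : P2), homogComp_mem f.2 d⟩
  have hc : ∀ d, (c d : P2).IsHomogeneous d := fun d => homogeneousComponent_isHomogeneous d _
  have hf : f = ∑ d ∈ Finset.range ((f : P2).totalDegree + 1), c d := by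
    apply Subtype.ext
    rw [AddSubmonoidClass.coe_finsetSum]
    exact (sum_homogeneousComponent (f : P2)).symm
  have he : (⟨eul f, eul_mem f.2⟩ : invRing Γ) =
      ∑ d ∈ Finset.range ((f : P2).totalDegree + 1), d • c d := by
    apply Subtype.ext
    rw [AddSubmonoidClass.coe_finsetSum]
    have h : eul (f : P2) = eul (∑ d ∈ Finset.range ((f : P2).totalDegree + 1),
        homogeneousComponent d (f : P2)) := by rw [sum_homogeneousComponent]
    refine h.trans ?_
    rw [eul_sum]
    refine Finset.sum_congr rfl fun d _ => ?_
    rw [eul_homog (hc d)]; rfl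
  rw [he]
  conv_rhs => rw [hf]
  rw [map_sum, map_sum, AddSubmonoidClass.coe_finsetSum, AddSubmonoidClass.coe_finsetSum, eul_sum]
  refine Finset.sum_congr rfl fun d _ => ?_
  rw [eul_homog (hθ d _ (hc d)), map_nsmul]; rfl

/-- An automorphism `θ` of the invariants extends to a homomorphism `φ` from `ℂ[u,v]` to any
algebraically closed extension `M`; its values are integral over `ℂ[u,v]`. -/
theorem exists_phi (Γ : Subgroup SL2) [Finite Γ] (θ : invRing Γ ≃ₐ[ℂ] invRing Γ)
    (M : Type) [Field M] [IsAlgClosed M] [Algebra ℂ M] [Algebra P2 M] [IsScalarTower ℂ P2 M]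
    (hinj : Function.Injective (algebraMap P2 M)) :
    ∃ φ : P2 →ₐ[ℂ] M, (∀ f : invRing Γ, φ f = algebraMap P2 M (θ f : P2)) ∧
      ∀ p, IsIntegral P2 (φ p) := by
  have hInt : ∀ p : P2, IsIntegral (invRing Γ) p := by
    intro p
    obtain ⟨q, hq, s, hs, hprod⟩ := orbit_poly Γ p
    refine ⟨q, hq, ?_⟩
    rw [← Polynomial.eval_map, hprod, Polynomial.eval_prod]
    exact Finset.prod_eq_zero ((hs 1).2 (one_mem Γ)) (by simp [matSub_one])
  have : Algebra.IsIntegral (invRing Γ) P2 := ⟨hInt⟩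
  let ψ : invRing Γ →+* M :=
    (algebraMap P2 M).comp ((invRing Γ).val.toRingHom.comp (θ : invRing Γ →+* invRing Γ))
  have hψ : ∀ f, ψ f = algebraMap P2 M (θ f : P2) := fun f => rfl
  obtain ⟨φ, hφ⟩ := exists_ringHom_extension (S := P2) ψ (by
    intro a b h
    exact θ.injective (Subtype.ext (hinj h)))
  have hφ' : ∀ f : invRing Γ, φ f = algebraMap P2 M (θ f : P2) := fun f => hφ f
  refine ⟨{ φ with commutes' := ?_ }, hφ', ?_⟩
  · intro c
    have := hφ' (algebraMap ℂ _ c)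
    rw [AlgEquiv.commutes] at this
    change φ (algebraMap ℂ P2 c) = _
    rw [IsScalarTower.algebraMap_apply ℂ P2 M]
    exact this
  · intro p
    change IsIntegral P2 (φ p)
    obtain ⟨q, hq, h0⟩ := hInt p
    refine ⟨q.map ((invRing Γ).val.toRingHom.comp (θ : invRing Γ →+* invRing Γ)), hq.map _, ?_⟩
    rw [Polynomial.eval₂_map]
    have := congrArg φ h0
    rw [Polynomial.hom_eval₂, map_zero] at this
    rw [← this]
    congr 1
    ext f
    exact (hφ' f).symm

/-- The lifting statement, with values in an algebraic closure `M` of `ℂ(u,v)`. Let `φ : ℂ[u,v] → M`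
extend `θ`, and let `D k` extend the partial derivatives to `M`. The entries `D k (φ (X i))` of the
Jacobian matrix of `φ` satisfy the hypotheses of `mem_range_of_euler`, so they are constants, and
`φ` is linear by Euler's identity. -/
theorem exists_lift_aux (Γ : Subgroup SL2) [Finite Γ] (θ : invRing Γ ≃ₐ[ℂ] invRing Γ)
    (hθ : IsAntiPoissonInv Γ θ)
    (M : Type) [Field M] [IsAlgClosed M] [Algebra ℂ M] [Algebra P2 M] [Algebra (FractionRing P2) M]
    [IsScalarTower ℂ P2 M] [IsScalarTower P2 (FractionRing P2) M]
    [Algebra.IsAlgebraic (FractionRing P2) M] [Algebra.FormallyEtale P2 M] :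
    ∃ m : Matrix (Fin 2) (Fin 2) ℂ, m.det = -1 ∧ ∀ f : invRing Γ, (θ f : P2) = matSub m f := by
  have hinj : Function.Injective (algebraMap P2 M) := by
    rw [IsScalarTower.algebraMap_eq P2 (FractionRing P2) M]
    exact (algebraMap (FractionRing P2) M).injective.comp
      (IsFractionRing.injective P2 (FractionRing P2))
  obtain ⟨φ, hφ, hφi⟩ := exists_phi Γ θ M hinj
  obtain ⟨hgr, hinv, hap⟩ := hθ
  set ι := algebraMap P2 M with hι
  -- `D k` is the extension of `pderiv k` to `M`
  choose D hD using fun k : Fin 2 => exists_derivation_lift (P := P2) (T := M) (pderiv k)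
  -- the image of `θ f` in `M` is `f` evaluated at `(φ u, φ v)`
  have chain : ∀ (f : invRing Γ) k, ι (pderiv k (θ f : P2)) =
      φ (pderiv 0 (f : P2)) * D k (φ (X 0)) + φ (pderiv 1 (f : P2)) * D k (φ (X 1)) := by
    intro f k
    rw [← hD, ← hφ, derivation_chain]
  obtain ⟨f, hf, g, hg, hfg⟩ := exists_bracket_ne_zero Γ ![1, 0]
    (by intro h; have := congrFun h 0; simp at this)
  have hfg0 : pb f g ≠ 0 := by rintro h; rw [h] at hfg; simp at hfg
  have hφbr : ∀ f g : invRing Γ, ι (pb (θ f : P2) (θ g : P2)) = - φ (pb f g) := by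
    intro f g
    have := hap f g ⟨pb f g, pb_mem f.2 g.2⟩ rfl
    rw [← neg_eq_iff_eq_neg] at this
    rw [← this, map_neg, ← hφ]
  have hφfg : φ (pb f g) ≠ 0 := by
    have := hφ ⟨pb f g, pb_mem hf hg⟩
    simp only at this
    rw [this]
    intro h
    have h1 : θ ⟨pb f g, pb_mem hf hg⟩ = 0 := Subtype.ext (hinj (h.trans (map_zero ι).symm))
    rw [map_eq_zero_iff _ θ.injective] at h1
    exact hfg0 (congrArg Subtype.val h1)
  -- the Jacobian determinant of `φ` is the factor by which `θ` scales the bracket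
  have hJ : D 0 (φ (X 0)) * D 1 (φ (X 1)) - D 1 (φ (X 0)) * D 0 (φ (X 1)) = -1 := by
    have h1 := hφbr ⟨f, hf⟩ ⟨g, hg⟩
    rw [pb, map_sub, map_mul, map_mul, chain, chain, chain, chain] at h1
    simp only [pb, map_sub, map_mul] at h1 hφfg
    apply mul_left_cancel₀ hφfg
    linear_combination h1
  -- Solving the chain rules for `θ f` and `θ g` by Cramer's rule expresses
  -- `{θ f, θ g} * D k (φ (X i))` through values of `φ` and polynomials, which are integral.
  have hI : ∀ i k, ∀ f ∈ invRing Γ, ∀ g ∈ invRing Γ,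
      IsIntegral P2 (ι (pb f g) * D k (φ (X i))) := by
    have aux : ∀ i k, ∀ f g : invRing Γ,
        IsIntegral P2 (ι (pb (θ f : P2) (θ g : P2)) * D k (φ (X i))) := by
      intro i k f g
      have hInt : ∀ a b p q : P2, IsIntegral P2 (ι a * φ p - ι b * φ q) := fun a b p q =>
        (isIntegral_algebraMap.mul (hφi p)).sub (isIntegral_algebraMap.mul (hφi q))
      let F : P2 := θ f
      let G : P2 := θ g
      have c1 := chain f 0
      have c2 := chain f 1
      have c3 := chain g 0
      have c4 := chain g 1
      fin_cases i
      · have := hInt (pderiv k G) (pderiv k F) (pderiv 1 (f : P2)) (pderiv 1 (g : P2))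
        convert this using 1
        fin_cases k
        · simp only [pb, map_sub, map_mul, F, G, c1, c2, c3, c4, Fin.zero_eta]
          linear_combination (φ (pderiv 0 (f : P2)) * φ (pderiv 1 (g : P2)) -
            φ (pderiv 1 (f : P2)) * φ (pderiv 0 (g : P2))) * D 0 (φ (X 0)) * hJ
        · simp only [pb, map_sub, map_mul, F, G, c1, c2, c3, c4, Fin.zero_eta, Fin.mk_one]
          linear_combination (φ (pderiv 0 (f : P2)) * φ (pderiv 1 (g : P2)) -
            φ (pderiv 1 (f : P2)) * φ (pderiv 0 (g : P2))) * D 1 (φ (X 0)) * hJ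
      · have := hInt (pderiv k F) (pderiv k G) (pderiv 0 (g : P2)) (pderiv 0 (f : P2))
        convert this using 1
        fin_cases k
        · simp only [pb, map_sub, map_mul, F, G, c1, c2, c3, c4, Fin.zero_eta, Fin.mk_one]
          linear_combination (φ (pderiv 0 (f : P2)) * φ (pderiv 1 (g : P2)) -
            φ (pderiv 1 (f : P2)) * φ (pderiv 0 (g : P2))) * D 0 (φ (X 1)) * hJ
        · simp only [pb, map_sub, map_mul, F, G, c1, c2, c3, c4, Fin.mk_one]
          linear_combination (φ (pderiv 0 (f : P2)) * φ (pderiv 1 (g : P2)) -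
            φ (pderiv 1 (f : P2)) * φ (pderiv 0 (g : P2))) * D 1 (φ (X 1)) * hJ
    intro i k f hf g hg
    have := aux i k (θ ⟨f, hf⟩) (θ ⟨g, hg⟩)
    rwa [hinv, hinv] at this
  -- the Euler derivation of `M`
  let E : Derivation ℂ M M := ι (X 0) • D 0 + ι (X 1) • D 1
  have hEdef : ∀ x, E x = ι (X 0) * D 0 x + ι (X 1) * D 1 x := fun x => rfl
  have hE : ∀ p, E (ι p) = ι (eul p) := by
    intro p
    rw [hEdef, hD, hD, eul, map_add, map_mul, map_mul]
  have hEeq : ∀ f : invRing Γ, φ (pderiv 0 (f : P2)) * (E (φ (X 0)) - φ (X 0)) +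
      φ (pderiv 1 (f : P2)) * (E (φ (X 1)) - φ (X 1)) = 0 := by
    intro f
    have h1 := hφ ⟨eul f, eul_mem f.2⟩
    rw [eul_comm hgr, ← hE, ← hφ, derivation_chain] at h1
    simp only [eul, map_add, map_mul] at h1
    linear_combination -h1
  -- `φ u` and `φ v` are homogeneous of degree one with respect to `E`
  have hEU : ∀ i, E (φ (X i)) = φ (X i) := by
    have h1 := hEeq ⟨f, hf⟩
    have h2 := hEeq ⟨g, hg⟩
    simp only [pb, map_sub, map_mul] at hφfg
    simp only at h1 h2
    have h0 : E (φ (X 0)) - φ (X 0) = 0 := by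
      apply mul_left_cancel₀ hφfg
      linear_combination φ (pderiv 1 g) * h1 - φ (pderiv 1 f) * h2
    have h1 : E (φ (X 1)) - φ (X 1) = 0 := by
      apply mul_left_cancel₀ hφfg
      linear_combination φ (pderiv 0 f) * h2 - φ (pderiv 0 g) * h1
    intro i
    fin_cases i
    · exact sub_eq_zero.1 h0
    · exact sub_eq_zero.1 h1
  have hcomm : ∀ x, D 0 (D 1 x) = D 1 (D 0 x) := by
    intro x
    have := derivation_eq_zero (P := P2) ⁅D 0, D 1⁆ (by
      intro p
      rw [Derivation.commutator_apply, hD, hD, hD, hD, ← map_sub]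
      have h := congrArg (fun d : Derivation ℂ P2 P2 => d p)
        (show ⁅(pderiv 0 : Derivation ℂ P2 P2), pderiv 1⁆ = 0 from by
          apply MvPolynomial.derivation_ext
          intro i
          fin_cases i <;> simp [Derivation.commutator_apply])
      simp only [Derivation.commutator_apply] at h
      rw [h]; simp) x
    rw [Derivation.commutator_apply] at this
    exact sub_eq_zero.1 this
  -- their derivatives are therefore homogeneous of degree zero
  have hEw : ∀ i k, E (D k (φ (X i))) = 0 := by
    intro i k
    have h1 := congrArg (D k) (hEU i)
    rw [hEdef, map_add, Derivation.leibniz, Derivation.leibniz, hD, hD] at h1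
    rw [hEdef]
    fin_cases k
    · simp [hcomm] at h1 ⊢; linear_combination h1
    · simp [hcomm] at h1 ⊢; linear_combination h1
  choose c hc using fun i k => mem_range_of_euler Γ M (D k (φ (X i))) (hI i k) E hE (hEw i k)
  have hU : ∀ p, φ p = ι (matSub (Matrix.of c) p) := by
    intro p
    have : φ = (IsScalarTower.toAlgHom ℂ P2 M).comp (matSub (Matrix.of c)) := by
      apply MvPolynomial.algHom_ext
      intro i
      rw [← hEU i, hEdef, hc, hc]
      simp only [AlgHom.comp_apply, matSub, aeval_X, Fin.sum_univ_two, Matrix.of_apply,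
        IsScalarTower.toAlgHom_apply, map_add, map_mul, ← MvPolynomial.algebraMap_eq,
        ← IsScalarTower.algebraMap_apply ℂ P2 M, hι]
      ring
    rw [this]; rfl
  refine ⟨Matrix.of c, ?_, fun f => hinj ?_⟩
  · apply (algebraMap ℂ M).injective
    rw [Matrix.det_fin_two]
    simp only [Matrix.of_apply, map_sub, map_mul, ← hc, map_neg, map_one]
    exact hJ
  · rw [← hU, hφ]

/-- Every anti-Poisson involution of `ℂ[u,v]^Γ` is induced by a linear substitution of
determinant `-1`. -/
theorem exists_lift (Γ : Subgroup SL2) [Finite Γ] (θ : invRing Γ ≃ₐ[ℂ] invRing Γ)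
    (hθ : IsAntiPoissonInv Γ θ) :
    ∃ m : Matrix (Fin 2) (Fin 2) ℂ, m.det = -1 ∧ ∀ f : invRing Γ, (θ f : P2) = matSub m f := by
  have : Algebra.FormallyEtale P2 (FractionRing P2) :=
    Algebra.FormallyEtale.of_isLocalization (nonZeroDivisors P2)
  have : Algebra.FormallyEtale (FractionRing P2) (AlgebraicClosure (FractionRing P2)) :=
    Algebra.FormallyEtale.of_isSeparable _ _
  have : Algebra.FormallyEtale P2 (AlgebraicClosure (FractionRing P2)) :=
    Algebra.FormallyEtale.comp P2 (FractionRing P2) _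
  exact exists_lift_aux Γ θ hθ (AlgebraicClosure (FractionRing P2))

/-! ### Substitutions fixing the invariants -/

/-- A substitution fixing `ℂ[u,v]^Γ` comes from `Γ`: it permutes the roots of the orbit polynomial
of each linear form `u + t v`, so it agrees with an element of `Γ` on each of these; by the
pigeonhole principle one element of `Γ` serves two values of `t`, which span all linear forms. -/
theorem exists_mem_of_fix (Γ : Subgroup SL2) [Finite Γ] (h : Matrix (Fin 2) (Fin 2) ℂ)
    (hfix : ∀ f ∈ invRing Γ, matSub h f = f) :
    ∃ γ ∈ Γ, (γ : Matrix (Fin 2) (Fin 2) ℂ) = h := by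
  let l : ℂ → P2 := fun t => X 0 + C t * X 1
  have root : ∀ t, ∃ γ : Γ, matSub h (l t) = matSub ((γ : SL2) : Matrix (Fin 2) (Fin 2) ℂ) (l t) := by
    intro t
    obtain ⟨q, -, s, hs, hprod⟩ := orbit_poly Γ (l t)
    have h0 : q.eval₂ (algebraMap (invRing Γ) P2) (l t) = 0 := by
      rw [← Polynomial.eval_map, hprod, Polynomial.eval_prod]
      exact Finset.prod_eq_zero ((hs 1).2 (one_mem Γ)) (by simp [matSub_one])
    have h1 := congrArg (matSub h : P2 →+* P2) h0
    rw [Polynomial.hom_eval₂, map_zero] at h1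
    have hcomp : (matSub h : P2 →+* P2).comp (algebraMap (invRing Γ) P2) =
        algebraMap (invRing Γ) P2 := by
      ext1 f
      exact hfix f f.2
    rw [hcomp, ← Polynomial.eval_map, hprod, Polynomial.eval_prod, Finset.prod_eq_zero_iff] at h1
    obtain ⟨γ, hγ, h2⟩ := h1
    refine ⟨⟨γ, (hs γ).1 hγ⟩, ?_⟩
    rw [Polynomial.eval_sub, Polynomial.eval_X, Polynomial.eval_C] at h2
    exact sub_eq_zero.1 h2
  choose G hG using root
  obtain ⟨t, t', htt, hGG⟩ := Finite.exists_ne_map_eq_of_infinite G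
  have e1 := hG t
  have e2 := hG t'
  rw [← hGG] at e2
  have hC : ∀ (m : Matrix (Fin 2) (Fin 2) ℂ) t, matSub m (l t) =
      matSub m (X 0) + C t * matSub m (X 1) := by
    intro m t
    have h1 : matSub m (C t) = C t := by simp [matSub]
    simp only [l]
    rw [map_add, map_mul, h1]
  rw [hC, hC] at e1 e2
  have hne : (C (t - t') : P2) ≠ 0 := by
    rw [Ne, C_eq_zero]; exact sub_ne_zero.2 htt
  have hX1 : matSub h (X 1) = matSub ((G t : SL2) : Matrix (Fin 2) (Fin 2) ℂ) (X 1) := by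
    apply mul_left_cancel₀ hne
    rw [C_sub]
    linear_combination e1 - e2
  refine ⟨G t, (G t).2, (matSub_injective_of_X fun i => ?_).symm⟩
  fin_cases i
  · rw [hX1] at e1
    exact add_right_cancel e1
  · exact hX1

/-! ### Conjugation by the centralizer -/

/-- The matrices `m` and `m'` are conjugate under the centralizer of `Γ` in `SL₂(ℂ)`. -/
def CentConj (Γ : Subgroup SL2) (m m' : Matrix (Fin 2) (Fin 2) ℂ) : Prop :=
  ∃ g : SL2, (∀ γ ∈ Γ, g * γ = γ * g) ∧
    (g : Matrix (Fin 2) (Fin 2) ℂ) * m = m' * (g : Matrix (Fin 2) (Fin 2) ℂ)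

theorem coe_inv_mul (g : SL2) :
    ((g⁻¹ : SL2) : Matrix (Fin 2) (Fin 2) ℂ) * (g : Matrix (Fin 2) (Fin 2) ℂ) = 1 := by
  rw [← Matrix.SpecialLinearGroup.coe_mul, inv_mul_cancel, Matrix.SpecialLinearGroup.coe_one]

theorem coe_mul_inv (g : SL2) :
    (g : Matrix (Fin 2) (Fin 2) ℂ) * ((g⁻¹ : SL2) : Matrix (Fin 2) (Fin 2) ℂ) = 1 := by
  rw [← Matrix.SpecialLinearGroup.coe_mul, mul_inv_cancel, Matrix.SpecialLinearGroup.coe_one]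

theorem CentConj.symm {Γ : Subgroup SL2} {m m' : Matrix (Fin 2) (Fin 2) ℂ}
    (h : CentConj Γ m m') : CentConj Γ m' m := by
  obtain ⟨g, hc, hg⟩ := h
  refine ⟨g⁻¹, fun γ hγ => ?_, ?_⟩
  · rw [inv_mul_eq_iff_eq_mul, ← mul_assoc, hc γ hγ, mul_inv_cancel_right]
  · calc ((g⁻¹ : SL2) : Matrix (Fin 2) (Fin 2) ℂ) * m'
        = ((g⁻¹ : SL2) : Matrix (Fin 2) (Fin 2) ℂ) * (m' * g) * (g⁻¹ : SL2) := by
          rw [Matrix.mul_assoc, Matrix.mul_assoc, coe_mul_inv, Matrix.mul_one]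
      _ = m * (g⁻¹ : SL2) := by
          rw [← hg, ← Matrix.mul_assoc, coe_inv_mul, Matrix.one_mul]

theorem CentConj.trans {Γ : Subgroup SL2} {m m' m'' : Matrix (Fin 2) (Fin 2) ℂ}
    (h : CentConj Γ m m') (h' : CentConj Γ m' m'') : CentConj Γ m m'' := by
  obtain ⟨g, hc, hg⟩ := h
  obtain ⟨g', hc', hg'⟩ := h'
  refine ⟨g' * g, fun γ hγ => ?_, ?_⟩
  · rw [mul_assoc, hc γ hγ, ← mul_assoc, hc' γ hγ, mul_assoc]
  · rw [Matrix.SpecialLinearGroup.coe_mul, Matrix.mul_assoc, hg, ← Matrix.mul_assoc, hg',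
      Matrix.mul_assoc]

/-- The determinant of an intertwiner can be normalized to `1` by a scalar. -/
theorem centConj_of_det_ne_zero {Γ : Subgroup SL2} {m m' g : Matrix (Fin 2) (Fin 2) ℂ}
    (hdet : g.det ≠ 0)
    (hc : ∀ γ ∈ Γ, g * (γ : Matrix (Fin 2) (Fin 2) ℂ) = (γ : Matrix (Fin 2) (Fin 2) ℂ) * g)
    (hg : g * m = m' * g) : CentConj Γ m m' := by
  obtain ⟨r, hr⟩ := IsAlgClosed.exists_pow_nat_eq g.det (n := 2) two_pos
  have hr0 : r ≠ 0 := by rintro rfl; apply hdet; rw [← hr]; norm_num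
  have h1 : (r⁻¹ • g).det = 1 := by
    rw [Matrix.det_smul, Fintype.card_fin, ← hr]
    field_simp
  refine ⟨⟨r⁻¹ • g, h1⟩, fun γ hγ => Subtype.ext ?_, ?_⟩
  · change (r⁻¹ • g) * (γ : Matrix (Fin 2) (Fin 2) ℂ) = (γ : Matrix (Fin 2) (Fin 2) ℂ) * (r⁻¹ • g)
    rw [Matrix.smul_mul, Matrix.mul_smul, hc γ hγ]
  · change (r⁻¹ • g) * m = m' * (r⁻¹ • g)
    rw [Matrix.smul_mul, Matrix.mul_smul, hg]

/-- Two matrices of determinant `-1` with the same square which induce the same automorphism of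
`Γ` are conjugate under the centralizer of `Γ`, up to a sign: with `A = m'⁻¹ m`, the matrices
`1 + A` and `1 - A` intertwine `m` and `-m` respectively with `m'`, and
`det (1 + A) + det (1 - A) = 2 + 2 det A = 4`, so one of them is invertible. -/
theorem centConj_or_neg {Γ : Subgroup SL2} (c : Γ → Γ) {m m' : Matrix (Fin 2) (Fin 2) ℂ}
    (hm : m.det = -1) (hm' : m'.det = -1) (hsq : m * m = m' * m')
    (hc : ∀ γ : Γ, m * ((γ : SL2) : Matrix (Fin 2) (Fin 2) ℂ) =
      ((c γ : SL2) : Matrix (Fin 2) (Fin 2) ℂ) * m)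
    (hc' : ∀ γ : Γ, m' * ((γ : SL2) : Matrix (Fin 2) (Fin 2) ℂ) =
      ((c γ : SL2) : Matrix (Fin 2) (Fin 2) ℂ) * m') :
    CentConj Γ m m' ∨ CentConj Γ (-m) m' := by
  have hu : IsUnit m'.det := by rw [hm']; exact isUnit_one.neg
  have h1 : m'⁻¹ * m' = 1 := Matrix.nonsing_inv_mul _ hu
  have h2 : m' * m'⁻¹ = 1 := Matrix.mul_nonsing_inv _ hu
  set n := m'⁻¹
  have hcomm : ∀ γ ∈ Γ, n * m * (γ : Matrix (Fin 2) (Fin 2) ℂ) =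
      (γ : Matrix (Fin 2) (Fin 2) ℂ) * (n * m) := by
    intro γ hγ
    have hn : n * ((c ⟨γ, hγ⟩ : SL2) : Matrix (Fin 2) (Fin 2) ℂ) =
        (γ : Matrix (Fin 2) (Fin 2) ℂ) * n := by
      calc n * ((c ⟨γ, hγ⟩ : SL2) : Matrix (Fin 2) (Fin 2) ℂ)
          = n * (((c ⟨γ, hγ⟩ : SL2) : Matrix (Fin 2) (Fin 2) ℂ) * m') * n := by
            rw [mul_assoc, mul_assoc, h2, mul_one]
        _ = γ * n := by rw [← hc', ← mul_assoc, h1, one_mul]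
    rw [mul_assoc, hc ⟨γ, hγ⟩, ← mul_assoc, hn, mul_assoc]
  have hn2 : n * m * m = m' := by rw [mul_assoc, hsq, ← mul_assoc, h1, one_mul]
  have hmn : m' * (n * m) = m := by rw [← mul_assoc, h2, one_mul]
  have hdet : (n * m).det = 1 := by
    have := congrArg Matrix.det hmn
    rw [Matrix.det_mul, hm, hm'] at this
    linear_combination -this
  -- the terms linear in `A` cancel
  have hsum : (1 + n * m).det + (1 - n * m).det = 4 := by
    generalize n * m = A at hdet
    rw [Matrix.det_fin_two] at hdet
    simp only [Matrix.det_fin_two, Matrix.add_apply, Matrix.sub_apply, Matrix.one_apply]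
    simp
    linear_combination 2 * hdet
  by_cases h : (1 + n * m).det = 0
  · right
    have h' : (1 - n * m).det ≠ 0 := by
      intro h'; rw [h, h'] at hsum; norm_num at hsum
    refine centConj_of_det_ne_zero h' (fun γ hγ => ?_) ?_
    · rw [sub_mul, mul_sub, hcomm γ hγ, one_mul, mul_one]
    · rw [sub_mul, mul_sub, mul_neg, mul_neg, hmn, hn2, one_mul, mul_one]; abel
  · left
    refine centConj_of_det_ne_zero h (fun γ hγ => ?_) ?_
    · rw [add_mul, mul_add, hcomm γ hγ, one_mul, mul_one]
    · rw [add_mul, mul_add, hmn, hn2, one_mul, mul_one]; abel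

/-- The automorphism of `ℂ[u,v]^Γ` induced by an element of the centralizer of `Γ`. -/
def centAut (Γ : Subgroup SL2) (g : SL2) (hg : ∀ γ ∈ Γ, g * γ = γ * g) :
    invRing Γ ≃ₐ[ℂ] invRing Γ :=
  have hmem : ∀ h : SL2, (∀ γ ∈ Γ, h * γ = γ * h) → ∀ f : invRing Γ,
      matSub (h : Matrix (Fin 2) (Fin 2) ℂ) f ∈ invRing Γ := by
    intro h hh f
    rw [mem_invRing]
    intro γ hγ
    rw [matSub_matSub, ← Matrix.SpecialLinearGroup.coe_mul, hh γ hγ,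
      Matrix.SpecialLinearGroup.coe_mul, ← matSub_matSub, mem_invRing.1 f.2 γ hγ]
  have hg' : ∀ γ ∈ Γ, g⁻¹ * γ = γ * g⁻¹ := fun γ hγ => by
    rw [inv_mul_eq_iff_eq_mul, ← mul_assoc, hg γ hγ, mul_inv_cancel_right]
  AlgEquiv.ofAlgHom
    (((matSub (g : Matrix (Fin 2) (Fin 2) ℂ)).comp (invRing Γ).val).codRestrict _ (hmem g hg))
    (((matSub ((g⁻¹ : SL2) : Matrix (Fin 2) (Fin 2) ℂ)).comp (invRing Γ).val).codRestrict _
      (hmem g⁻¹ hg'))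
    (AlgHom.ext fun f => Subtype.ext <|
      (matSub_matSub _ _ _).trans (by rw [coe_inv_mul, matSub_one]; rfl))
    (AlgHom.ext fun f => Subtype.ext <|
      (matSub_matSub _ _ _).trans (by rw [coe_mul_inv, matSub_one]; rfl))

theorem apiConj_of_centConj {Γ : Subgroup SL2} {θ θ' : invRing Γ ≃ₐ[ℂ] invRing Γ}
    {m m' : Matrix (Fin 2) (Fin 2) ℂ} (hθ : ∀ f : invRing Γ, (θ f : P2) = matSub m f)
    (hθ' : ∀ f : invRing Γ, (θ' f : P2) = matSub m' f) (h : CentConj Γ m m') :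
    APIConj Γ θ θ' := by
  obtain ⟨g, hc, hg⟩ := h.symm
  have hv : ∀ f : invRing Γ, (centAut Γ g hc f : P2) = matSub (g : Matrix (Fin 2) (Fin 2) ℂ) f :=
    fun f => rfl
  have hv' : ∀ f : invRing Γ, ((centAut Γ g hc).symm f : P2) =
      matSub ((g⁻¹ : SL2) : Matrix (Fin 2) (Fin 2) ℂ) f := fun f => rfl
  refine ⟨centAut Γ g hc, ⟨fun d f hf => matSub_homog _ hf, fun f g h hh => ?_⟩,
    fun f => Subtype.ext ?_⟩
  · rw [hv, hv, hv, hh, pb_matSub]; simp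
  · have hm' : ((g⁻¹ : SL2) : Matrix (Fin 2) (Fin 2) ℂ) *
        (m * (g : Matrix (Fin 2) (Fin 2) ℂ)) = m' := by
      rw [← hg, ← Matrix.mul_assoc, coe_inv_mul, Matrix.one_mul]
    rw [hθ', hv, hθ, hv', matSub_matSub, matSub_matSub]
    exact congrArg (fun n => matSub n (f : P2)) hm'.symm

/-! ### Finiteness -/

/-- The matrix `m` inducing an anti-Poisson involution satisfies `m² ∈ Γ` and normalizes `Γ`. The
datum `d` records the automorphism `γ ↦ m γ m⁻¹` of `Γ` and the element `m²`. -/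
theorem exists_data (Γ : Subgroup SL2) [Finite Γ] (θ : invRing Γ ≃ₐ[ℂ] invRing Γ)
    (hθ : IsAntiPoissonInv Γ θ) :
    ∃ m : Matrix (Fin 2) (Fin 2) ℂ, m.det = -1 ∧ (∀ f : invRing Γ, (θ f : P2) = matSub m f) ∧
      ∃ d : (Γ → Γ) × Γ, m * m = ((d.2 : SL2) : Matrix (Fin 2) (Fin 2) ℂ) ∧
        ∀ γ : Γ, m * ((γ : SL2) : Matrix (Fin 2) (Fin 2) ℂ) =
          ((d.1 γ : SL2) : Matrix (Fin 2) (Fin 2) ℂ) * m := by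
  obtain ⟨m, hm, hθm⟩ := exists_lift Γ θ hθ
  have hu : IsUnit m.det := by rw [hm]; exact isUnit_one.neg
  obtain ⟨s, hs, hsm⟩ := exists_mem_of_fix Γ (m * m) (fun f hf => by
    have := hθ.2.1 ⟨f, hf⟩
    rw [← matSub_matSub, ← hθm ⟨f, hf⟩, ← hθm, this])
  have hconj : ∀ γ : Γ, ∃ γ' : Γ, m * ((γ : SL2) : Matrix (Fin 2) (Fin 2) ℂ) =
      ((γ' : SL2) : Matrix (Fin 2) (Fin 2) ℂ) * m := by
    intro γ
    obtain ⟨γ', hγ', h⟩ := exists_mem_of_fix Γ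
      (m * (((γ : SL2) : Matrix (Fin 2) (Fin 2) ℂ) * m⁻¹)) (fun f hf => by
        rw [← matSub_matSub, ← matSub_matSub, ← hθm ⟨f, hf⟩,
          mem_invRing.1 (θ ⟨f, hf⟩).2 γ γ.2, hθm, matSub_matSub, Matrix.mul_nonsing_inv _ hu,
          matSub_one])
    refine ⟨⟨γ', hγ'⟩, ?_⟩
    rw [h, Matrix.mul_assoc, Matrix.mul_assoc, Matrix.nonsing_inv_mul _ hu, Matrix.mul_one]
  choose c hc using hconj
  exact ⟨m, hm, hθm, (c, ⟨s, hs⟩), hsm.symm, hc⟩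

/-- for a finite subgroup `Γ ⊆ SL₂(ℂ)` there are only finitely many
anti-Poisson involutions of `ℂ[u,v]^Γ` up to conjugation by graded Poisson automorphisms. -/
theorem stmt15 (Γ : Subgroup SL2) [Finite Γ] :
    ∃ F : Set ((invRing Γ) ≃ₐ[ℂ] (invRing Γ)), F.Finite ∧
      (∀ θ ∈ F, IsAntiPoissonInv Γ θ) ∧
      ∀ θ', IsAntiPoissonInv Γ θ' → ∃ θ ∈ F, APIConj Γ θ θ' := by
  let A := {θ : invRing Γ ≃ₐ[ℂ] invRing Γ // IsAntiPoissonInv Γ θ}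
  choose m hdet hm d hsq hc using fun θ : A => exists_data Γ θ.1 θ.2
  -- `b` picks a reference involution for each value of `d`
  have hb : ∀ x : Set.range d, ∃ θ : A, d θ = x := fun x => x.2
  choose b hb using hb
  -- `centConj_or_neg` leaves two possibilities for given `d`, told apart by the second component
  let t : A → ((Γ → Γ) × Γ) × Prop := fun θ =>
    (d θ, CentConj Γ (m θ) (m (b ⟨d θ, θ, rfl⟩)))
  have ht : ∀ θ θ' : A, t θ = t θ' → CentConj Γ (m θ) (m θ') := by
    intro θ θ' h
    obtain ⟨h1, h2⟩ := Prod.ext_iff.1 h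
    simp only [t] at h1 h2
    have hx : (⟨d θ', θ', rfl⟩ : Set.range d) = ⟨d θ, θ, rfl⟩ := Subtype.ext h1.symm
    rw [hx] at h2
    have hbd := hb ⟨d θ, θ, rfl⟩
    set β := b ⟨d θ, θ, rfl⟩
    simp only at hbd
    have key : ∀ η : A, d η = d β → CentConj Γ (m β) (m η) ∨ CentConj Γ (-m β) (m η) := by
      intro η hη
      refine centConj_or_neg (d β).1 (hdet β) (hdet η) ?_ (hc β) ?_
      · rw [hsq, hsq, hη]
      · rw [← hη]; exact hc η
    by_cases hβ : CentConj Γ (m θ) (m β)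
    · exact hβ.trans (h2 ▸ hβ).symm
    · have hβ' : ¬ CentConj Γ (m θ') (m β) := h2 ▸ hβ
      have k1 := (key θ hbd.symm).resolve_left fun h => hβ h.symm
      have k2 := (key θ' (h1.symm.trans hbd.symm)).resolve_left fun h => hβ' h.symm
      exact k1.symm.trans k2
  have : Finite (((Γ → Γ) × Γ) × Prop) := inferInstance
  have : Finite (Set.range t) := Subtype.finite
  have hr : ∀ y : Set.range t, ∃ θ : A, t θ = y := fun y => y.2
  choose r hr using hr
  refine ⟨Set.range fun y => (r y).1, Set.finite_range _, ?_, ?_⟩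
  · rintro _ ⟨y, rfl⟩
    exact (r y).2
  · intro θ' hθ'
    refine ⟨_, ⟨⟨t ⟨θ', hθ'⟩, _, rfl⟩, rfl⟩, ?_⟩
    exact apiConj_of_centConj (hm _) (hm ⟨θ', hθ'⟩) (ht _ _ (hr _))
end
end

section
/- Let n ≥ 1 and Γ = Γ_{A_n}. The invariant ring ℂ[u,v]^{Γ_{A_n}} equals the ℂ-subalgebra of ℂ[u,v] generated by x = u^{n+1}, y = v^{n+1}, z = uv, and the ℂ-algebra homomorphism ℂ[X,Y,Z] → ℂ[u,v] sending X ↦ u^{n+1}, Y ↦ v^{n+1}, Z ↦ uv has kernel equal to the principal ideal generated by XY − Z^{n+1}; consequently it induces a ℂ-algebra isomorphism ℂ[X,Y,Z]/(XY − Z^{n+1}) ≅ ℂ[u,v]^{Γ_{A_n}}. -/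
/-!
The argument is monomial by monomial. Both halves rest on the map `anSection n` sending an exponent
`(i, j)` of `u, v` to a monomial in `X, Y, Z`: the common part `min i j` goes into `Z`, and the
remaining `|i - j|` is divided by `n + 1` and goes into `X` or `Y`.

* A generator `diag(ε, ε⁻¹)` of `Γ`, with `ε` a primitive root of unity, scales `u^i v^j` by
  `ε⁻ⁱ εʲ`, so an invariant polynomial only involves monomials with `i ≡ j mod n + 1`
  (`modEq_of_mem_invRing`). Such a monomial is the image of `anSection n (i, j)`
  (`anMap_anSection`), so the range of `ℂ[X,Y,Z] → ℂ[u,v]` contains the invariant ring; it lies in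
  it because `u^{n+1}`, `v^{n+1}` and `uv` are invariant.
* Extending `anSection n` linearly and reducing modulo `XY - Z^{n+1}` gives a linear left inverse
  of the induced map on the quotient: a monomial `X^a Y^b Z^c` with `a ≤ b` is sent to
  `Z^{(n+1)a+c} Y^{b-a} ≡ (XY)^a Z^c Y^{b-a}`, and symmetrically if `b ≤ a`. So the kernel is
  contained in `(XY - Z^{n+1})`, and the reverse inclusion is a direct computation.
-/

open MvPolynomial Complex Matrix

noncomputable section

/-- The ideal `(XY - Z^{n+1})` of `ℂ[X,Y,Z]`. -/
abbrev anIdeal (n : ℕ) : Ideal (MvPolynomial (Fin 3) ℂ) :=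
  Ideal.span {(X 0 * X 1 - X 2 ^ (n + 1) : MvPolynomial (Fin 3) ℂ)}

/-- The homomorphism `ℂ[X,Y,Z] → ℂ[u,v]`, `X ↦ u^{n+1}`, `Y ↦ v^{n+1}`, `Z ↦ uv`. -/
abbrev anMap (n : ℕ) : MvPolynomial (Fin 3) ℂ →ₐ[ℂ] P2 :=
  MvPolynomial.aeval (![(X 0 : P2) ^ (n + 1), (X 1 : P2) ^ (n + 1), (X 0 * X 1 : P2)])

/-- The monomial of `ℂ[X,Y,Z]` attached to the exponent `m` of a monomial of `ℂ[u,v]`. It lifts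
`u^(m 0) v^(m 1)` along `anMap n` when `m 0 ≡ m 1` modulo `n + 1`; for other `m` its value is
irrelevant, the truncated differences and rounded quotients being harmless. -/
def anSection (n : ℕ) (m : Fin 2 →₀ ℕ) : MvPolynomial (Fin 3) ℂ :=
  X 2 ^ min (m 0) (m 1) * X 0 ^ ((m 0 - m 1) / (n + 1)) * X 1 ^ ((m 1 - m 0) / (n + 1))

lemma monomial_eq_mul_pow (m : Fin 2 →₀ ℕ) (c : ℂ) :
    monomial m c = C c * ((X 0 : P2) ^ m 0 * X 1 ^ m 1) := by
  rw [monomial_eq, Finsupp.prod_fintype _ _ (by simp), Fin.prod_univ_two]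

lemma anMap_anSection (n : ℕ) (m : Fin 2 →₀ ℕ) (h : m 0 ≡ m 1 [MOD n + 1]) :
    anMap n (anSection n m) = monomial m 1 := by
  rw [monomial_eq_mul_pow]
  simp only [anSection, map_mul, map_pow, aeval_X, C_1, one_mul, Matrix.cons_val, mul_pow,
    ← pow_mul]
  rcases le_total (m 0) (m 1) with hle | hle
  · obtain ⟨k, hk⟩ := (Nat.modEq_iff_dvd' hle).1 h
    have h1 : m 1 = m 0 + (n + 1) * k := by omega
    simp [h1, pow_add, mul_assoc]
  · obtain ⟨k, hk⟩ := (Nat.modEq_iff_dvd' hle).1 h.symm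
    have h1 : m 0 = m 1 + (n + 1) * k := by omega
    simp [h1, pow_add]
    ring

lemma mk_mul_eq (n : ℕ) :
    (Ideal.Quotient.mk (anIdeal n) (X 0)) * Ideal.Quotient.mk (anIdeal n) (X 1)
      = Ideal.Quotient.mk (anIdeal n) (X 2) ^ (n + 1) := by
  rw [← map_mul, ← map_pow, Ideal.Quotient.eq]
  exact Ideal.mem_span_singleton_self _

/-- `anSection n` is a left inverse of `anMap n` on monomials, modulo `XY - Z^{n+1}`. -/
lemma mk_anSection (n : ℕ) (a b c : ℕ) (m : Fin 2 →₀ ℕ)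
    (h0 : m 0 = (n + 1) * a + c) (h1 : m 1 = (n + 1) * b + c) :
    Ideal.Quotient.mk (anIdeal n) (anSection n m)
      = Ideal.Quotient.mk (anIdeal n) (X 0 ^ a * X 1 ^ b * X 2 ^ c) := by
  simp only [anSection, h0, h1, map_mul, map_pow]
  rcases le_total a b with hle | hle
  · obtain ⟨k, rfl⟩ := Nat.exists_eq_add_of_le hle
    have e1 : (n + 1) * (a + k) + c - ((n + 1) * a + c) = (n + 1) * k := by
      rw [mul_add]; omega
    have e2 : (n + 1) * a + c - ((n + 1) * (a + k) + c) = 0 := by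
      rw [mul_add]; omega
    have e3 : min ((n + 1) * a + c) ((n + 1) * (a + k) + c) = (n + 1) * a + c := by
      rw [mul_add]; omega
    rw [e1, e2, e3, Nat.mul_div_cancel_left _ (Nat.succ_pos n), pow_add _ ((n + 1) * a), pow_mul,
      ← mk_mul_eq]
    simp only [Nat.zero_div]
    ring
  · obtain ⟨k, rfl⟩ := Nat.exists_eq_add_of_le hle
    have e1 : (n + 1) * (b + k) + c - ((n + 1) * b + c) = (n + 1) * k := by
      rw [mul_add]; omega
    have e2 : (n + 1) * b + c - ((n + 1) * (b + k) + c) = 0 := by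
      rw [mul_add]; omega
    have e3 : min ((n + 1) * (b + k) + c) ((n + 1) * b + c) = (n + 1) * b + c := by
      rw [mul_add]; omega
    rw [e1, e2, e3, Nat.mul_div_cancel_left _ (Nat.succ_pos n), pow_add _ ((n + 1) * b), pow_mul,
      ← mk_mul_eq]
    simp only [Nat.zero_div]
    ring

/-- The linear extension of `anSection n`, read modulo `XY - Z^{n+1}`. -/
def anInv (n : ℕ) : P2 →ₗ[ℂ] (MvPolynomial (Fin 3) ℂ ⧸ anIdeal n) :=
  (basisMonomials (Fin 2) ℂ).constr ℂ fun m => Ideal.Quotient.mk (anIdeal n) (anSection n m)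

lemma anInv_comp_anMap (n : ℕ) :
    anInv n ∘ₗ (anMap n).toLinearMap = (Ideal.Quotient.mkₐ ℂ (anIdeal n)).toLinearMap := by
  refine (basisMonomials (Fin 3) ℂ).ext fun s => ?_
  have hs : (monomial s 1 : MvPolynomial (Fin 3) ℂ) = X 0 ^ s 0 * X 1 ^ s 1 * X 2 ^ s 2 := by
    rw [monomial_eq, Finsupp.prod_fintype _ _ (by simp), Fin.prod_univ_three, C_1, one_mul]
  let m : Fin 2 →₀ ℕ := Finsupp.equivFunOnFinite.symm
    ![(n + 1) * s 0 + s 2, (n + 1) * s 1 + s 2]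
  have hm : anMap n (monomial s 1) = basisMonomials (Fin 2) ℂ m := by
    rw [hs, coe_basisMonomials]
    beta_reduce
    rw [monomial_eq_mul_pow]
    simp [m, pow_add, pow_mul]
    ring
  simp only [LinearMap.comp_apply, coe_basisMonomials, AlgHom.toLinearMap_apply]
  rw [hm, anInv, Module.Basis.constr_basis, mk_anSection n (s 0) (s 1) (s 2) m rfl rfl, hs]
  rfl

lemma ker_anMap (n : ℕ) : RingHom.ker (anMap n) = anIdeal n := by
  apply le_antisymm
  · intro p hp
    have h := LinearMap.congr_fun (anInv_comp_anMap n) p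
    simp only [LinearMap.comp_apply, AlgHom.toLinearMap_apply] at h
    rw [(RingHom.mem_ker).1 hp, map_zero] at h
    exact Ideal.Quotient.eq_zero_iff_mem.1 h.symm
  · rw [Ideal.span_singleton_le_iff_mem, RingHom.mem_ker]
    simp [mul_pow]

lemma range_anMap (n : ℕ) : (anMap n).range = Algebra.adjoin ℂ
    ({(X 0 : P2) ^ (n + 1), (X 1 : P2) ^ (n + 1), (X 0 * X 1 : P2)} : Set P2) := by
  rw [← Algebra.adjoin_range_eq_range_aeval]
  congr 1
  ext p
  simp [Matrix.range_cons]
  tauto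

lemma coe_inv_of_diag (g : SL2) (ε : ℂ)
    (hg : (g : Matrix (Fin 2) (Fin 2) ℂ) = !![ε, 0; 0, ε⁻¹]) :
    ((g⁻¹ : SL2) : Matrix (Fin 2) (Fin 2) ℂ) = !![ε⁻¹, 0; 0, ε] := by
  rw [Matrix.SpecialLinearGroup.coe_inv, hg, Matrix.adjugate_fin_two_of]
  simp

lemma slAct_X_of_diag (g : SL2) (ε : ℂ)
    (hg : (g : Matrix (Fin 2) (Fin 2) ℂ) = !![ε, 0; 0, ε⁻¹]) :
    slAct g (X 0) = C ε⁻¹ * X 0 ∧ slAct g (X 1) = C ε * X 1 := by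
  simp [slAct, matSub, coe_inv_of_diag g ε hg]

lemma coeff_slAct_of_diag (g : SL2) (ε : ℂ)
    (hg : (g : Matrix (Fin 2) (Fin 2) ℂ) = !![ε, 0; 0, ε⁻¹]) (f : P2) (m : Fin 2 →₀ ℕ) :
    coeff m (slAct g f) = ε⁻¹ ^ m 0 * ε ^ m 1 * coeff m f := by
  obtain ⟨hu, hv⟩ := slAct_X_of_diag g ε hg
  induction f using MvPolynomial.induction_on' with
  | monomial s c =>
    have h : slAct g (monomial s c) = monomial s (ε⁻¹ ^ s 0 * ε ^ s 1 * c) := by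
      rw [monomial_eq_mul_pow, monomial_eq_mul_pow, map_mul, map_mul, map_pow, map_pow, hu, hv,
        ← algebraMap_eq, AlgHom.commutes, algebraMap_eq, mul_pow, mul_pow]
      simp only [map_mul, map_pow]
      ring
    rw [h, coeff_monomial, coeff_monomial]
    split_ifs with hs
    · rw [hs]
    · simp
  | add p q hp hq => rw [map_add, coeff_add, coeff_add, hp, hq, mul_add]

lemma mem_invRing_iff (Γ : Subgroup SL2) (f : P2) :
    f ∈ invRing Γ ↔ ∀ g ∈ Γ, slAct g f = f := by
  simp [invRing, Algebra.mem_iInf, AlgHom.mem_equalizer]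

lemma exists_diag (n : ℕ) (ε : ℂ) (hε : ε ^ (n + 1) = 1) :
    ∃ g : SL2, (g : Matrix (Fin 2) (Fin 2) ℂ) = !![ε, 0; 0, ε⁻¹] := by
  have h0 : ε ≠ 0 := by
    rintro rfl
    simp at hε
  exact ⟨⟨!![ε, 0; 0, ε⁻¹], by simp [Matrix.det_fin_two_of, h0]⟩, rfl⟩

lemma modEq_of_mem_invRing (n : ℕ) (Γ : Subgroup SL2)
    (hΓ : ∀ g : SL2, g ∈ Γ ↔ ∃ ε : ℂ, ε ^ (n + 1) = 1 ∧
      (g : Matrix (Fin 2) (Fin 2) ℂ) = !![ε, 0; 0, ε⁻¹])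
    (f : P2) (hf : f ∈ invRing Γ) (m : Fin 2 →₀ ℕ) (hm : coeff m f ≠ 0) :
    m 0 ≡ m 1 [MOD n + 1] := by
  have hprim := Complex.isPrimitiveRoot_exp (n + 1) n.succ_ne_zero
  set ε := Complex.exp (2 * Real.pi * Complex.I / ((n + 1 : ℕ) : ℂ))
  obtain ⟨g, hg⟩ := exists_diag n ε hprim.pow_eq_one
  have hinv := (mem_invRing_iff Γ f).1 hf g ((hΓ g).2 ⟨ε, hprim.pow_eq_one, hg⟩)
  have h := coeff_slAct_of_diag g ε hg f m
  rw [hinv] at h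
  have h1 : ε⁻¹ ^ m 0 * ε ^ m 1 = 1 := mul_right_cancel₀ hm (by rw [← h, one_mul])
  have h2 : ε ^ ((m 1 : ℤ) - m 0) = 1 := by
    rw [zpow_sub₀ (hprim.ne_zero n.succ_ne_zero), zpow_natCast, zpow_natCast, div_eq_inv_mul,
      ← inv_pow, h1]
  exact Nat.modEq_iff_dvd.2 ((hprim.zpow_eq_one_iff_dvd _).1 h2)

lemma range_anMap_eq_invRing (n : ℕ) (Γ : Subgroup SL2)
    (hΓ : ∀ g : SL2, g ∈ Γ ↔ ∃ ε : ℂ, ε ^ (n + 1) = 1 ∧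
      (g : Matrix (Fin 2) (Fin 2) ℂ) = !![ε, 0; 0, ε⁻¹]) :
    (anMap n).range = invRing Γ := by
  apply le_antisymm
  · rw [range_anMap, Algebra.adjoin_le_iff]
    intro f hf
    rw [SetLike.mem_coe, mem_invRing_iff]
    intro g hgΓ
    obtain ⟨ε, hε, hg⟩ := (hΓ g).1 hgΓ
    obtain ⟨hu, hv⟩ := slAct_X_of_diag g ε hg
    have h0 : ε ≠ 0 := by
      rintro rfl
      simp at hε
    rcases hf with rfl | rfl | rfl
    · rw [map_pow, hu, mul_pow, ← map_pow, inv_pow, hε, inv_one, C_1, one_mul]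
    · rw [map_pow, hv, mul_pow, ← map_pow, hε, C_1, one_mul]
    · rw [map_mul, hu, hv, mul_mul_mul_comm, ← map_mul, inv_mul_cancel₀ h0, C_1, one_mul]
  · intro f hf
    rw [f.as_sum]
    refine Subalgebra.sum_mem _ fun m hm => ?_
    have hmod := modEq_of_mem_invRing n Γ hΓ f hf m (mem_support_iff.1 hm)
    rw [← mul_one (coeff m f), ← smul_eq_mul, ← smul_monomial, ← anMap_anSection n m hmod]
    exact Subalgebra.smul_mem _ (AlgHom.mem_range_self _ _) _

/-- presentation of the type-`Aₙ` invariant ring: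
`ℂ[u,v]^{Γ_{Aₙ}}` is generated by `x = u^{n+1}`, `y = v^{n+1}`, `z = uv`, the kernel of
`ℂ[X,Y,Z] → ℂ[u,v]` is `(XY - Z^{n+1})`, and `ℂ[X,Y,Z]/(XY - Z^{n+1}) ≅ ℂ[u,v]^{Γ_{Aₙ}}`. -/
theorem stmt16 (n : ℕ) (hn : 1 ≤ n) (Γ : Subgroup SL2)
    (hΓ : ∀ g : SL2, g ∈ Γ ↔ ∃ ε : ℂ, ε ^ (n + 1) = 1 ∧
      (g : Matrix (Fin 2) (Fin 2) ℂ) = !![ε, 0; 0, ε⁻¹]) :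
    Algebra.adjoin ℂ
        ({(X 0 : P2) ^ (n + 1), (X 1 : P2) ^ (n + 1), (X 0 * X 1 : P2)} : Set P2)
      = invRing Γ ∧
    RingHom.ker (MvPolynomial.aeval
        (![(X 0 : P2) ^ (n + 1), (X 1 : P2) ^ (n + 1), (X 0 * X 1 : P2)]) :
          MvPolynomial (Fin 3) ℂ →ₐ[ℂ] P2)
      = Ideal.span {(X 0 * X 1 - X 2 ^ (n + 1) : MvPolynomial (Fin 3) ℂ)} ∧
    ∃ e : (MvPolynomial (Fin 3) ℂ ⧸
        Ideal.span {(X 0 * X 1 - X 2 ^ (n + 1) : MvPolynomial (Fin 3) ℂ)}) ≃ₐ[ℂ] invRing Γ,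
      ((e (Ideal.Quotient.mk
            (Ideal.span {(X 0 * X 1 - X 2 ^ (n + 1) : MvPolynomial (Fin 3) ℂ)}) (X 0))
          : invRing Γ) : P2) = (X 0 : P2) ^ (n + 1) ∧
      ((e (Ideal.Quotient.mk
            (Ideal.span {(X 0 * X 1 - X 2 ^ (n + 1) : MvPolynomial (Fin 3) ℂ)}) (X 1))
          : invRing Γ) : P2) = (X 1 : P2) ^ (n + 1) ∧
      ((e (Ideal.Quotient.mk
            (Ideal.span {(X 0 * X 1 - X 2 ^ (n + 1) : MvPolynomial (Fin 3) ℂ)}) (X 2))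
          : invRing Γ) : P2) = (X 0 * X 1 : P2) := by
  have hr := range_anMap_eq_invRing n Γ hΓ
  have hk := ker_anMap n
  refine ⟨by rw [← range_anMap, hr], hk, ?_⟩
  refine ⟨((Ideal.quotientEquivAlgOfEq ℂ hk.symm).trans
    (Ideal.quotientKerEquivRange (anMap n))).trans (Subalgebra.equivOfEq _ _ hr), ?_, ?_, ?_⟩
  · exact aeval_X _ 0
  · exact aeval_X _ 1
  · exact aeval_X _ 2
end
end
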